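/- Fix x = (q, S, v, W, p, Λ) ∈ 𝒫 := ℝⁿ × ℝ × ℝⁿ × ℝ × ℝⁿ × ℝ with (∂L/∂S)(q, v, S) ≠ 0. Let Δ_𝒫(x) := {(δq, δS, δv, δW, δp, δΛ) : (δq, δS) ∈ C_V(q, v, S)} ⊆ ℝ³ⁿ⁺³ and let ω_𝒫 be the presymplectic form ω_𝒫((a, σ, b, τ, c, λ), (a′, σ′, b′, τ′, c′, λ′)) = ⟨a, c′⟩ − ⟨a′, c⟩ + σλ′ − σ′λ. Then ((q̇, Ṡ, v̇, Ẇ, ṗ, Λ̇), (α, 𝒯, β, Υ, u, Ψ)) ∈ D(ω_𝒫, Δ_𝒫(x)) if and only if: (∂L/∂S)(q, v, S)·(ṗ + α) = −(Λ̇ + 𝒯)·F^fr(q, v, S), (∂L/∂S)(q, v, S)·Ṡ = ⟨F^fr(q, v, S), q̇⟩, β = 0, Υ = 0, u = q̇, and Ψ = Ṡ. -/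

import Mathlib

open scoped RealInnerProductSpace

noncomputable section

/-- `ℝⁿ` with the Euclidean inner product. -/
abbrev E (n : ℕ) : Type := EuclideanSpace ℝ (Fin n)

/-- The Pontryagin bundle `𝒫 = T𝒬 ⊕ T*𝒬` of `𝒬 = ℝⁿ × ℝ`, with points
`x = (q, S, v, W, p, Λ)`. -/
abbrev P (n : ℕ) : Type := E n × ℝ × E n × ℝ × E n × ℝ

/-- Partial derivative `∂L/∂S` of the Lagrangian `L(q, v, S)`. -/
noncomputable def LS {n : ℕ} (L : E n → E n → ℝ → ℝ) (q v : E n) (S : ℝ) : ℝ :=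
  deriv (L q v) S

/-- The Dirac structure induced by a form `ω` and a subspace `Δ`, covectors being
identified with vectors via the pairing `pair` (the Euclidean inner product). -/
def Dirac {F : Type*} (pair ω : F → F → ℝ) (Δ : Set F) : Set (F × F) :=
  {p | p.1 ∈ Δ ∧ ∀ w ∈ Δ, pair p.2 w = ω p.1 w}

/-- Euclidean pairing on `𝒫`. -/
def pairP {n : ℕ} (ζ w : P n) : ℝ :=
  ⟪ζ.1, w.1⟫ + ζ.2.1 * w.2.1 + ⟪ζ.2.2.1, w.2.2.1⟫ + ζ.2.2.2.1 * w.2.2.2.1 +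
    ⟪ζ.2.2.2.2.1, w.2.2.2.2.1⟫ + ζ.2.2.2.2.2 * w.2.2.2.2.2

/-- Presymplectic form
`ω_𝒫((a,σ,b,τ,c,λ),(a',σ',b',τ',c',λ')) = ⟨a,c'⟩ − ⟨a',c⟩ + σλ' − σ'λ` on `𝒫`. -/
def omegaP {n : ℕ} (x y : P n) : ℝ :=
  ⟪x.1, y.2.2.2.2.1⟫ - ⟪y.1, x.2.2.2.2.1⟫ + x.2.1 * y.2.2.2.2.2 - y.2.1 * x.2.2.2.2.2

/-!
The presymplectic form is represented, through the Euclidean pairing, by its flat map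
`(a, σ, b, τ, c, λ) ↦ (-c, -λ, 0, 0, a, σ)`. Hence `(u, ζ)` lies in the induced Dirac structure
exactly when `u ∈ Δ` and `ζ - u♭` annihilates `Δ`. Since `Δ` constrains only `(δq, δS)`, the last
four components of `ζ - u♭` vanish and the first two annihilate `C_V`. As `∂L/∂S ≠ 0`, the space
`C_V` is the graph of `δq ↦ ⟪F, δq⟫ / (∂L/∂S)`, so its annihilator is the line spanned by
`(F, -∂L/∂S)`.
-/

/-- The annihilator of `Δ` with respect to a pairing, covectors being written as vectors. -/
def pairAnnihilator {F : Type*} (pair : F → F → ℝ) (Δ : Set F) : Set F :=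
  {ζ | ∀ w ∈ Δ, pair ζ w = 0}

theorem mem_Dirac_iff_sub_mem_pairAnnihilator {F : Type*} [Sub F] {pair ω : F → F → ℝ}
    {flat : F → F} (pair_sub_left : ∀ ζ η w, pair (ζ - η) w = pair ζ w - pair η w)
    (ω_eq : ∀ u w, ω u w = pair (flat u) w) {Δ : Set F} {u ζ : F} :
    (u, ζ) ∈ Dirac pair ω Δ ↔ u ∈ Δ ∧ ζ - flat u ∈ pairAnnihilator pair Δ := by
  simp only [Dirac, pairAnnihilator, Set.mem_ofPred_eq, pair_sub_left, ω_eq, sub_eq_zero]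

section VariationalConstraint

variable {V : Type*} [NormedAddCommGroup V] [InnerProductSpace ℝ V]

/-- The variational constraint `C_V ⊆ V × ℝ`, with `l` standing for `∂L/∂S` and `f` for the
friction force. -/
def variationalConstraint (l : ℝ) (f : V) : Set (V × ℝ) :=
  {c | l * c.2 = ⟪f, c.1⟫}

theorem zero_mem_variationalConstraint (l : ℝ) (f : V) : 0 ∈ variationalConstraint l f := by
  simp [variationalConstraint]

theorem forall_mem_variationalConstraint_iff {l : ℝ} (hl : l ≠ 0) (f g : V) (t : ℝ) :
    (∀ c ∈ variationalConstraint l f, ⟪g, c.1⟫ + t * c.2 = 0) ↔ l • g = -(t • f) := by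
  have inner_smul_add (a : V) : ⟪l • g + t • f, a⟫ = l * ⟪g, a⟫ + t * ⟪f, a⟫ := by
    rw [inner_add_left, real_inner_smul_left, real_inner_smul_left]
  rw [← add_eq_zero_iff_eq_neg]
  constructor
  · intro h
    refine ext_inner_right ℝ fun a => ?_
    have h_graph : ⟪g, l • a⟫ + t * ⟪f, a⟫ = 0 :=
      h (l • a, ⟪f, a⟫) (real_inner_smul_right f a l).symm
    rw [inner_smul_add, inner_zero_left, ← real_inner_smul_right, h_graph]
  · rintro h ⟨a, σ⟩ (hσ : l * σ = ⟪f, a⟫)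
    refine mul_left_cancel₀ hl ?_
    calc l * (⟪g, a⟫ + t * σ) = l * ⟪g, a⟫ + t * (l * σ) := by ring
      _ = ⟪l • g + t • f, a⟫ := by rw [hσ, inner_smul_add]
      _ = l * 0 := by rw [h, inner_zero_left, mul_zero]

end VariationalConstraint

section PontryaginBundle

variable {n : ℕ}

/-- The flat map of the presymplectic form `omegaP`: the covector `ω_𝒫(x, ·)`, written as a vector
by means of the Euclidean pairing. -/
def flatP (x : P n) : P n :=
  (-x.2.2.2.2.1, -x.2.2.2.2.2, 0, 0, x.1, x.2.1)

/-- The distribution on `𝒫` lifted from a constraint `C` on `(δq, δS)`, leaving the remaining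
components free. -/
def liftP (C : Set (E n × ℝ)) : Set (P n) :=
  {δ | (δ.1, δ.2.1) ∈ C}

theorem pairP_sub_left (ζ η w : P n) : pairP (ζ - η) w = pairP ζ w - pairP η w := by
  simp only [pairP, Prod.fst_sub, Prod.snd_sub, inner_sub_left]
  ring

theorem omegaP_eq_pairP_flatP (x w : P n) : omegaP x w = pairP (flatP x) w := by
  simp only [omegaP, pairP, flatP, inner_neg_left, inner_zero_left,
    real_inner_comm x.2.2.2.2.1 w.1]
  ring

theorem mem_pairAnnihilator_liftP_iff {C : Set (E n × ℝ)} (zero_mem : 0 ∈ C) {ζ : P n} :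
    ζ ∈ pairAnnihilator pairP (liftP C) ↔
      (∀ c ∈ C, ⟪ζ.1, c.1⟫ + ζ.2.1 * c.2 = 0) ∧ ζ.2.2 = 0 := by
  constructor
  · intro h
    have h_free (b : E n × ℝ × E n × ℝ) : pairP ζ (0, 0, b) = 0 := h (0, 0, b) zero_mem
    refine ⟨fun c hc => ?_, Prod.ext ?_ (Prod.ext ?_ (Prod.ext ?_ ?_))⟩
    · simpa [pairP] using h (c.1, c.2, 0) hc
    · exact ext_inner_right ℝ fun b => by simpa [pairP] using h_free (b, 0, 0, 0)
    · simpa [pairP] using h_free (0, 1, 0, 0)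
    · exact ext_inner_right ℝ fun c => by simpa [pairP] using h_free (0, 0, c, 0)
    · simpa [pairP] using h_free (0, 0, 0, 1)
  · rintro ⟨hC, h_free⟩ w hw
    simpa [pairP, h_free] using hC (w.1, w.2.1) hw

theorem mem_Dirac_liftP_iff {C : Set (E n × ℝ)} (zero_mem : 0 ∈ C) {x ζ : P n} :
    (x, ζ) ∈ Dirac pairP omegaP (liftP C) ↔
      (x.1, x.2.1) ∈ C ∧
        (∀ c ∈ C, ⟪x.2.2.2.2.1 + ζ.1, c.1⟫ + (x.2.2.2.2.2 + ζ.2.1) * c.2 = 0) ∧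
        ζ.2.2 = (0, 0, x.1, x.2.1) := by
  rw [mem_Dirac_iff_sub_mem_pairAnnihilator pairP_sub_left omegaP_eq_pairP_flatP,
    mem_pairAnnihilator_liftP_iff zero_mem]
  simp only [liftP, flatP, Set.mem_ofPred_eq, Prod.fst_sub, Prod.snd_sub, sub_neg_eq_add,
    sub_eq_zero, add_comm]

end PontryaginBundle

/-- local characterization of the induced Dirac structure on the
Pontryagin bundle `𝒫` of the thermodynamic configuration space. -/
theorem statement9 {n : ℕ} (L : E n → E n → ℝ → ℝ) (Ffr : E n → E n → ℝ → E n)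
    (q v p : E n) (S W Λ : ℝ) (hLS : LS L q v S ≠ 0)
    (qdot vdot pdot : E n) (Sdot Wdot Λdot : ℝ)
    (α β u : E n) (T Υ Ψ : ℝ) :
    ((⟨qdot, Sdot, vdot, Wdot, pdot, Λdot⟩ : P n), (⟨α, T, β, Υ, u, Ψ⟩ : P n)) ∈
      Dirac pairP omegaP
        {δ : P n | LS L q v S * δ.2.1 = ⟪Ffr q v S, δ.1⟫} ↔
    (LS L q v S • (pdot + α) = -((Λdot + T) • Ffr q v S) ∧
     LS L q v S * Sdot = ⟪Ffr q v S, qdot⟫ ∧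
     β = 0 ∧ Υ = 0 ∧ u = qdot ∧ Ψ = Sdot) := by
  change _ ∈ Dirac pairP omegaP (liftP (variationalConstraint (LS L q v S) (Ffr q v S))) ↔ _
  rw [mem_Dirac_liftP_iff (zero_mem_variationalConstraint _ _),
    forall_mem_variationalConstraint_iff hLS, and_left_comm]
  simp only [variationalConstraint, Set.mem_ofPred_eq, Prod.mk.injEq]

end
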